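/- Every medial quasigroup is hamiltonian: if Q is a quasigroup satisfying (x·y)·(u·v) = (x·u)·(y·v) for all x, y, u, v ∈ Q, then every subquasigroup of Q is normal in Q. -/

import Mathlib

/-- A (binary operation on a nonempty set is a) quasigroup: all left and right
translations are bijections. -/
def IsQuasigroup {Q : Type*} (mul : Q → Q → Q) : Prop :=
  Nonempty Q ∧ ∀ a : Q,
    Function.Bijective (fun x => mul a x) ∧ Function.Bijective (fun x => mul x a)

/-- A subquasigroup: a nonempty subset closed under multiplication and under both
divisions (the unique solutions of `a·x = b` and `y·a = b` for `a, b ∈ P` lie in `P`). -/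
def IsSubquasigroup {Q : Type*} (mul : Q → Q → Q) (P : Set Q) : Prop :=
  P.Nonempty ∧ ∀ a ∈ P, ∀ b ∈ P,
    mul a b ∈ P ∧ (∀ x, mul a x = b → x ∈ P) ∧ (∀ y, mul y a = b → y ∈ P)

/-- A normal congruence: an equivalence relation satisfying (C1), (C2), (C3). -/
def IsNormalCongruence {Q : Type*} (mul : Q → Q → Q) (r : Q → Q → Prop) : Prop :=
  Equivalence r ∧
  (∀ a b c d, r a b → r c d → r (mul a c) (mul b d)) ∧
  (∀ a b c d, r a b → r (mul a c) (mul b d) → r c d) ∧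
  (∀ a b c d, r c d → r (mul a c) (mul b d) → r a b)

/-- A subquasigroup is normal if it is an equivalence class of some normal congruence. -/
def IsNormalSubquasigroup {Q : Type*} (mul : Q → Q → Q) (P : Set Q) : Prop :=
  IsSubquasigroup mul P ∧
  ∃ r : Q → Q → Prop, IsNormalCongruence mul r ∧ ∃ a : Q, P = {x | r a x}

/-- A quasigroup is hamiltonian if every subquasigroup is normal. -/
def IsHamiltonian {Q : Type*} (mul : Q → Q → Q) : Prop :=
  ∀ P : Set Q, IsSubquasigroup mul P → IsNormalSubquasigroup mul P

/-!
Call `x` and `y` equivalent when the left cosets `x·P` and `y·P` coincide. For `e ∈ P`, we have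
`e·P = P = P·e`, so mediality gives `(a·e)·(c·P) = (a·c)·(e·P) = (a·c)·P` and
`(a·P)·(c·e) = (a·c)·(P·e) = (a·c)·P`. If `a·P = b·P`, then `a·e = b·q` for some `q ∈ P`, so one
and the same injective translation carries `c·P` to `(a·c)·P` and `d·P` to `(b·d)·P`; this gives
(C1) and (C2), and (C3) is symmetric.
-/

section

variable {Q : Type*} {mul : Q → Q → Q} {P : Set Q}

/-- Mediality of a binary operation: the two middle factors of a product of products may be
interchanged. -/
def IsMedial (mul : Q → Q → Q) : Prop :=
  ∀ x y u v : Q, mul (mul x y) (mul u v) = mul (mul x u) (mul y v)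

namespace IsSubquasigroup

theorem image_mul_left (hP : IsSubquasigroup mul P) {e : Q} (he : e ∈ P)
    (hsurj : Function.Surjective (mul e)) : mul e '' P = P := by
  refine (Set.image_subset_iff.2 fun p hp => (hP.2 e he p hp).1).antisymm fun p hp => ?_
  obtain ⟨x, hx⟩ := hsurj p
  exact ⟨x, (hP.2 e he p hp).2.1 x hx, hx⟩

theorem image_mul_right (hP : IsSubquasigroup mul P) {e : Q} (he : e ∈ P)
    (hsurj : Function.Surjective (mul · e)) : (mul · e) '' P = P := by
  refine (Set.image_subset_iff.2 fun p hp => (hP.2 p hp e he).1).antisymm fun p hp => ?_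
  obtain ⟨y, hy⟩ := hsurj p
  exact ⟨y, (hP.2 e he p hp).2.2 y hy, hy⟩

theorem of_image_mul_eq (hne : P.Nonempty)
    (hinjL : ∀ a, Function.Injective (mul a)) (hinjR : ∀ a, Function.Injective (mul · a))
    (hL : ∀ e ∈ P, mul e '' P = P) (hR : ∀ e ∈ P, (mul · e) '' P = P) :
    IsSubquasigroup mul P := by
  refine ⟨hne, fun a ha b hb => ⟨?_, ?_, ?_⟩⟩
  · exact hL a ha ▸ Set.mem_image_of_mem _ hb
  · rintro x rfl
    exact (hinjL a).mem_set_image.1 ((hL a ha).symm ▸ hb)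
  · rintro y rfl
    exact (hinjR a).mem_set_image.1 ((hR a ha).symm ▸ hb)

end IsSubquasigroup

/-- The relation of having the same left coset of `P`, encoded as equality of the images `x·P` and
`y·P`; it is the normal congruence exhibiting `P` as a class. -/
def LeftCosetRel (mul : Q → Q → Q) (P : Set Q) (x y : Q) : Prop :=
  mul x '' P = mul y '' P

theorem image_mul_left_leftCoset (hmed : IsMedial mul) {e : Q}
    (he : mul e '' P = P) (a c : Q) :
    mul (mul a e) '' (mul c '' P) = mul (mul a c) '' P :=
  calc mul (mul a e) '' (mul c '' P) = mul (mul a c) '' (mul e '' P) := by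
        simp only [Set.image_image, hmed a e c]
    _ = mul (mul a c) '' P := by rw [he]

theorem image_mul_right_leftCoset (hmed : IsMedial mul) {e : Q}
    (he : (mul · e) '' P = P) (a c : Q) :
    (mul · (mul c e)) '' (mul a '' P) = mul (mul a c) '' P :=
  calc (mul · (mul c e)) '' (mul a '' P) = mul (mul a c) '' ((mul · e) '' P) := by
        simp only [Set.image_image, hmed a _ c e]
    _ = mul (mul a c) '' P := by rw [he]

namespace LeftCosetRel

theorem equivalence (mul : Q → Q → Q) (P : Set Q) : Equivalence (LeftCosetRel mul P) :=
  eq_equivalence.comap fun x => mul x '' P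

theorem exists_mul_eq_mul {a b e : Q} (h : LeftCosetRel mul P a b) (he : e ∈ P) :
    ∃ q ∈ P, mul b q = mul a e := by
  have hmem : mul a e ∈ mul a '' P := Set.mem_image_of_mem _ he
  rwa [h] at hmem

theorem mul_iff_right (hmed : IsMedial mul)
    (hinjL : ∀ a, Function.Injective (mul a)) (hne : P.Nonempty) (hL : ∀ e ∈ P, mul e '' P = P)
    {a b c d : Q} (hab : LeftCosetRel mul P a b) :
    LeftCosetRel mul P (mul a c) (mul b d) ↔ LeftCosetRel mul P c d := by
  obtain ⟨e, he⟩ := hne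
  obtain ⟨q, hq, hbq⟩ := hab.exists_mul_eq_mul he
  have hac := image_mul_left_leftCoset hmed (hL e he) a c
  have hbd := image_mul_left_leftCoset hmed (hL q hq) b d
  rw [LeftCosetRel, ← hac, ← hbd, hbq, Set.image_eq_image (hinjL _), LeftCosetRel]

theorem mul_iff_left (hmed : IsMedial mul)
    (hinjR : ∀ a, Function.Injective (mul · a)) (hne : P.Nonempty)
    (hR : ∀ e ∈ P, (mul · e) '' P = P) {a b c d : Q} (hcd : LeftCosetRel mul P c d) :
    LeftCosetRel mul P (mul a c) (mul b d) ↔ LeftCosetRel mul P a b := by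
  obtain ⟨e, he⟩ := hne
  obtain ⟨q, hq, hdq⟩ := hcd.exists_mul_eq_mul he
  have hac := image_mul_right_leftCoset hmed (hR e he) a c
  have hbd := image_mul_right_leftCoset hmed (hR q hq) b d
  rw [LeftCosetRel, ← hac, ← hbd, hdq, Set.image_eq_image (hinjR _), LeftCosetRel]

theorem isNormalCongruence (hmed : IsMedial mul)
    (hinjL : ∀ a, Function.Injective (mul a)) (hinjR : ∀ a, Function.Injective (mul · a))
    (hne : P.Nonempty) (hL : ∀ e ∈ P, mul e '' P = P) (hR : ∀ e ∈ P, (mul · e) '' P = P) :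
    IsNormalCongruence mul (LeftCosetRel mul P) :=
  ⟨equivalence mul P,
    fun _ _ _ _ hab => (mul_iff_right hmed hinjL hne hL hab).2,
    fun _ _ _ _ hab => (mul_iff_right hmed hinjL hne hL hab).1,
    fun _ _ _ _ hcd => (mul_iff_left hmed hinjR hne hR hcd).1⟩

theorem iff_mem (hinjR : ∀ a, Function.Injective (mul · a)) (hL : ∀ e ∈ P, mul e '' P = P)
    (hR : ∀ e ∈ P, (mul · e) '' P = P) {e x : Q} (he : e ∈ P) :
    LeftCosetRel mul P e x ↔ x ∈ P := by
  rw [LeftCosetRel, hL e he]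
  refine ⟨fun hx => ?_, fun hx => (hL x hx).symm⟩
  have hxe : mul x e ∈ P := hx ▸ Set.mem_image_of_mem _ he
  exact (hinjR e).mem_set_image.1 ((hR e he).symm ▸ hxe)

end LeftCosetRel

theorem medial_is_hamiltonian_general (hmed : IsMedial mul)
    (hinjL : ∀ a, Function.Injective (mul a)) (hinjR : ∀ a, Function.Injective (mul · a))
    (hne : P.Nonempty) (hL : ∀ e ∈ P, mul e '' P = P) (hR : ∀ e ∈ P, (mul · e) '' P = P) :
    IsNormalSubquasigroup mul P := by
  refine ⟨.of_image_mul_eq hne hinjL hinjR hL hR, LeftCosetRel mul P,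
    LeftCosetRel.isNormalCongruence hmed hinjL hinjR hne hL hR, ?_⟩
  obtain ⟨e, he⟩ := hne
  exact ⟨e, Set.ext fun _ => (LeftCosetRel.iff_mem hinjR hL hR he).symm⟩

end

/-- Every medial quasigroup is hamiltonian. -/
theorem medial_is_hamiltonian {Q : Type*} (mul : Q → Q → Q)
    (hQ : IsQuasigroup mul)
    (hmed : ∀ x y u v : Q, mul (mul x y) (mul u v) = mul (mul x u) (mul y v)) :
    IsHamiltonian mul := by
  intro P hP
  have hinjL (a : Q) : Function.Injective (mul a) := (hQ.2 a).1.1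
  have hinjR (a : Q) : Function.Injective (mul · a) := (hQ.2 a).2.1
  exact medial_is_hamiltonian_general hmed hinjL hinjR hP.1
    (fun e he => hP.image_mul_left he (hQ.2 e).1.2)
    (fun e he => hP.image_mul_right he (hQ.2 e).2.2)
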